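/- The asymptotic symmetry bracket defines a Lie algebra: Let 𝔤 be the complex vector space of triples (Y, W, V) where Y, W : ℝ → ℂ are smooth 2π-periodic functions and V ∈ ℂ, equipped with the bracket [(Y₁,W₁,V₁), (Y₂,W₂,V₂)] := (Y₁Y₂′ − Y₂Y₁′, Y₁·(W₂′ + V₂/2) − Y₂·(W₁′ + V₁/2), 0). Then this bracket is bilinear, antisymmetric, and satisfies the Jacobi identity [[x,y],z] + [[y,z],x] + [[z,x],y] = 0 for all x, y, z ∈ 𝔤. -/

import Mathlib

/-- Triples `(Y, W, V)` with `Y, W : ℝ → ℂ` and `V ∈ ℂ`, the underlying space of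
the chiral half of the enhanced asymptotic symmetry algebra. -/
abbrev AsympTriple : Type := (ℝ → ℂ) × (ℝ → ℂ) × ℂ

/-- The elements of the asymptotic symmetry algebra: both function components
are smooth and `2π`-periodic. -/
def IsAsympElt (x : AsympTriple) : Prop :=
  ContDiff ℝ (⊤ : ℕ∞) x.1 ∧ Function.Periodic x.1 (2 * Real.pi) ∧
    ContDiff ℝ (⊤ : ℕ∞) x.2.1 ∧ Function.Periodic x.2.1 (2 * Real.pi)

/-- The bracket
`[(Y₁,W₁,V₁),(Y₂,W₂,V₂)] = (Y₁Y₂′ − Y₂Y₁′, Y₁(W₂′ + V₂/2) − Y₂(W₁′ + V₁/2), 0)`. -/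
noncomputable def asympBracket (x y : AsympTriple) : AsympTriple :=
  (fun t => x.1 t * deriv y.1 t - y.1 t * deriv x.1 t,
   fun t => x.1 t * (deriv y.2.1 t + y.2.2 / 2) - y.1 t * (deriv x.2.1 t + x.2.2 / 2),
   0)

theorem deriv_lin_aux {f g : ℝ → ℂ} (a b : ℂ) {t : ℝ} (hf : DifferentiableAt ℝ f t)
    (hg : DifferentiableAt ℝ g t) :
    deriv (a • f + b • g) t = a * deriv f t + b * deriv g t :=
  ((hf.hasDerivAt.const_smul a).add (hg.hasDerivAt.const_smul b)).deriv

theorem deriv_br_aux {f g p q : ℝ → ℂ} (c d : ℂ) {t : ℝ} (hf : DifferentiableAt ℝ f t)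
    (hg : DifferentiableAt ℝ g t) (hp : DifferentiableAt ℝ p t)
    (hq : DifferentiableAt ℝ q t) :
    deriv (fun t => f t * (p t + c) - g t * (q t + d)) t
      = deriv f t * (p t + c) + f t * deriv p t
        - (deriv g t * (q t + d) + g t * deriv q t) :=
  ((hf.hasDerivAt.mul (hp.hasDerivAt.add_const c)).sub
    (hg.hasDerivAt.mul (hq.hasDerivAt.add_const d))).deriv

theorem deriv_br_aux0 {f g p q : ℝ → ℂ} {t : ℝ} (hf : DifferentiableAt ℝ f t)
    (hg : DifferentiableAt ℝ g t) (hp : DifferentiableAt ℝ p t)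
    (hq : DifferentiableAt ℝ q t) :
    deriv (fun t => f t * p t - g t * q t) t
      = deriv f t * p t + f t * deriv p t - (deriv g t * q t + g t * deriv q t) :=
  ((hf.hasDerivAt.mul hp.hasDerivAt).sub (hg.hasDerivAt.mul hq.hasDerivAt)).deriv

theorem smooth_aux {f : ℝ → ℂ} (h : ContDiff ℝ (⊤ : ℕ∞) f) (t : ℝ) :
    DifferentiableAt ℝ f t ∧ DifferentiableAt ℝ (deriv f) t := by
  have h1 := contDiff_infty_iff_deriv.1 h
  exact ⟨h1.1 t, (contDiff_infty_iff_deriv.1 h1.2).1 t⟩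

/-- The asymptotic symmetry bracket is bilinear, antisymmetric and satisfies the
Jacobi identity on smooth `2π`-periodic triples: it defines a Lie algebra. -/
theorem stmt_7 :
    (∀ x y z : AsympTriple, IsAsympElt x → IsAsympElt y → IsAsympElt z →
      ∀ a b : ℂ,
        asympBracket (a • x + b • y) z = a • asympBracket x z + b • asympBracket y z ∧
        asympBracket z (a • x + b • y) = a • asympBracket z x + b • asympBracket z y) ∧
    (∀ x y : AsympTriple, IsAsympElt x → IsAsympElt y →
      asympBracket x y = - asympBracket y x) ∧
    (∀ x y z : AsympTriple, IsAsympElt x → IsAsympElt y → IsAsympElt z →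
      asympBracket (asympBracket x y) z + asympBracket (asympBracket y z) x
        + asympBracket (asympBracket z x) y = 0) := by
  refine ⟨?_, ?_, ?_⟩
  · rintro ⟨Y₁, W₁, V₁⟩ ⟨Y₂, W₂, V₂⟩ ⟨Y₃, W₃, V₃⟩ ⟨h1, -, k1, -⟩ ⟨h2, -, k2, -⟩ _ a b
    dsimp only at h1 k1 h2 k2
    constructor
    all_goals
      refine Prod.ext (funext fun t => ?_) (Prod.ext (funext fun t => ?_) ?_)
      · have e := deriv_lin_aux a b (smooth_aux h1 t).1 (smooth_aux h2 t).1
        simp [asympBracket, e]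
        ring
      · have e := deriv_lin_aux a b (smooth_aux k1 t).1 (smooth_aux k2 t).1
        simp [asympBracket, e]
        ring
      · simp [asympBracket]
  · rintro ⟨Y₁, W₁, V₁⟩ ⟨Y₂, W₂, V₂⟩ _ _
    refine Prod.ext (funext fun t => ?_) (Prod.ext (funext fun t => ?_) ?_) <;>
      simp [asympBracket]
  · rintro ⟨Y₁, W₁, V₁⟩ ⟨Y₂, W₂, V₂⟩ ⟨Y₃, W₃, V₃⟩ ⟨h1, -, k1, -⟩ ⟨h2, -, k2, -⟩ ⟨h3, -, k3, -⟩
    dsimp only at h1 k1 h2 k2 h3 k3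
    refine Prod.ext (funext fun t => ?_) (Prod.ext (funext fun t => ?_) ?_)
    · obtain ⟨a1, b1⟩ := smooth_aux h1 t
      obtain ⟨a2, b2⟩ := smooth_aux h2 t
      obtain ⟨a3, b3⟩ := smooth_aux h3 t
      simp only [asympBracket, Prod.fst_add, Pi.add_apply, Prod.fst_zero, Pi.zero_apply]
      rw [deriv_br_aux0 a1 a2 b2 b1, deriv_br_aux0 a2 a3 b3 b2, deriv_br_aux0 a3 a1 b1 b3]
      ring
    · obtain ⟨a1, -⟩ := smooth_aux h1 t
      obtain ⟨a2, -⟩ := smooth_aux h2 t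
      obtain ⟨a3, -⟩ := smooth_aux h3 t
      obtain ⟨-, b1⟩ := smooth_aux k1 t
      obtain ⟨-, b2⟩ := smooth_aux k2 t
      obtain ⟨-, b3⟩ := smooth_aux k3 t
      simp only [asympBracket, Prod.fst_add, Prod.snd_add, Pi.add_apply, Prod.fst_zero,
        Prod.snd_zero, Pi.zero_apply]
      rw [deriv_br_aux _ _ a1 a2 b2 b1, deriv_br_aux _ _ a2 a3 b3 b2,
        deriv_br_aux _ _ a3 a1 b1 b3]
      ring
    · simp [asympBracket]
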